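/- arXiv:1207.0879 — 8 statements merged into one kernel-verified Lean document; each statement's English description precedes it below -/
import Mathlib

section
/- Under the exact cooperative repair setup, for any subset I ⊆ R with |I| = a and any subset J ⊆ ⋂_{i∈I} H_i with |J| = b, the dimensions satisfy dim(Σ_{i∈I} W_i) − dim((Σ_{i∈I} W_i) ∩ (Σ_{j∈J} W_j)) ≤ a·((d−b)·β₁ + (r−a)·β₂). -/
open Module Submodule Finset

theorem finrank_sum_le_aux {B : ℕ} {F : Type*} [Field F] {ι : Type*} (s : Finset ι)
    (f : ι → Submodule F (Fin B → F)) (c : ℕ) (h : ∀ i ∈ s, finrank F (f i) ≤ c) :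
    finrank F (∑ i ∈ s, f i : Submodule F (Fin B → F)) ≤ s.card * c := by
  classical
  induction s using Finset.induction_on with
  | empty =>
    rw [Finset.sum_empty, Submodule.zero_eq_bot, finrank_bot]
    exact Nat.zero_le _
  | insert x s hx ih =>
    rw [Finset.sum_insert hx, Finset.card_insert_of_notMem hx]
    have h1 := ih (fun i hi => h i (Finset.mem_insert_of_mem hi))
    have h2 := h x (Finset.mem_insert_self x s)
    have h3 := Submodule.finrank_add_le_finrank_add_finrank (f x) (∑ i ∈ s, f i)
    rw [Submodule.add_eq_sup]
    nlinarith

theorem le_sum_aux {B : ℕ} {F : Type*} [Field F] {ι : Type*} {s : Finset ι}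
    (f : ι → Submodule F (Fin B → F)) {i : ι} (h : i ∈ s) : f i ≤ ∑ i ∈ s, f i := by
  classical
  rw [← Finset.add_sum_erase s f h, Submodule.add_eq_sup]
  exact le_sup_left

theorem sum_le_aux {B : ℕ} {F : Type*} [Field F] {ι : Type*} {s : Finset ι}
    {f : ι → Submodule F (Fin B → F)} {K : Submodule F (Fin B → F)}
    (h : ∀ i ∈ s, f i ≤ K) : ∑ i ∈ s, f i ≤ K := by
  classical
  induction s using Finset.induction_on with
  | empty =>
    rw [Finset.sum_empty, Submodule.zero_eq_bot]
    exact bot_le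
  | insert x s hx ih =>
    rw [Finset.sum_insert hx, Submodule.add_eq_sup]
    exact sup_le (h x (Finset.mem_insert_self x s))
      (ih fun i hi => h i (Finset.mem_insert_of_mem hi))

/-- Lemma 1 of the paper: under the exact cooperative repair setup, for any `I ⊆ R` with
`|I| = a` and `J ⊆ ⋂_{i ∈ I} H i` with `|J| = b`,
`dim (Σ_{i∈I} W i) - dim ((Σ_{i∈I} W i) ⊓ (Σ_{j∈J} W j)) ≤ a((d-b)β₁ + (r-a)β₂)`. -/
theorem mbcr_dimension_bound {B : ℕ} {F : Type*} [Field F] [Fintype F]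
    (n d r β₁ β₂ : ℕ) (hn : 0 < n) (hd : 0 < d) (hr : 0 < r) (hβ₁ : 0 < β₁) (hβ₂ : 0 < β₂)
    (W : Fin n → Submodule F (Fin B → F))
    (R : Finset (Fin n)) (hRcard : R.card = r)
    (H : Fin n → Finset (Fin n))
    (hHcard : ∀ i ∈ R, (H i).card = d)
    (hHdisj : ∀ i ∈ R, ∀ j ∈ H i, j ∉ R)
    (S : Fin n → Fin n → Submodule F (Fin B → F))
    (T : Fin n → Fin n → Submodule F (Fin B → F))
    (hSdim : ∀ i ∈ R, ∀ j ∈ H i, finrank F (S j i) ≤ β₁)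
    (hSsub : ∀ i ∈ R, ∀ j ∈ H i, S j i ≤ W j)
    (hTdim : ∀ i ∈ R, ∀ i' ∈ R, i' ≠ i → finrank F (T i' i) ≤ β₂)
    (hTsub : ∀ i ∈ R, ∀ i' ∈ R, i' ≠ i → T i' i ≤ ∑ j ∈ H i', S j i')
    (hrepair : ∀ i ∈ R, W i ≤ (∑ j ∈ H i, S j i) + ∑ i' ∈ R.erase i, T i' i)
    (I : Finset (Fin n)) (hI : I ⊆ R) (a : ℕ) (ha : I.card = a)
    (J : Finset (Fin n)) (hJ : ∀ i ∈ I, J ⊆ H i) (b : ℕ) (hb : J.card = b) :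
    finrank F (∑ i ∈ I, W i : Submodule F (Fin B → F)) -
      finrank F ((∑ i ∈ I, W i) ⊓ (∑ j ∈ J, W j) : Submodule F (Fin B → F)) ≤
      a * ((d - b) * β₁ + (r - a) * β₂) := by
  classical
  set K : Submodule F (Fin B → F) := ∑ j ∈ J, W j with hK
  set P : Fin n → Submodule F (Fin B → F) := fun i => ∑ j ∈ H i \ J, S j i with hP
  set Q : Fin n → Submodule F (Fin B → F) := fun i => ∑ i' ∈ R \ I, T i' i with hQ
  set V : Submodule F (Fin B → F) := ∑ i ∈ I, (P i ⊔ Q i) with hV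
  have hPV : ∀ i ∈ I, P i ⊔ Q i ≤ V := fun i hi => le_sum_aux (fun i => P i ⊔ Q i) hi
  have hSV : ∀ i ∈ I, ∑ j ∈ H i, S j i ≤ V ⊔ K := by
    intro i hi
    refine sum_le_aux fun j hj => ?_
    by_cases hjJ : j ∈ J
    · exact ((hSsub i (hI hi) j hj).trans (le_sum_aux W hjJ)).trans le_sup_right
    · have h1 : S j i ≤ P i := le_sum_aux (fun j => S j i) (Finset.mem_sdiff.2 ⟨hj, hjJ⟩)
      exact ((h1.trans le_sup_left).trans (hPV i hi)).trans le_sup_left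
  have hWV : ∑ i ∈ I, W i ≤ V ⊔ K := by
    refine sum_le_aux fun i hi => (hrepair i (hI hi)).trans ?_
    rw [Submodule.add_eq_sup]
    refine sup_le (hSV i hi) (sum_le_aux fun i' hi' => ?_)
    obtain ⟨hne, hR⟩ := Finset.mem_erase.1 hi'
    by_cases hi'I : i' ∈ I
    · exact (hTsub i (hI hi) i' hR hne).trans (hSV i' hi'I)
    · have h1 : T i' i ≤ Q i := le_sum_aux (fun j => T j i) (Finset.mem_sdiff.2 ⟨hR, hi'I⟩)
      exact ((h1.trans le_sup_right).trans (hPV i hi)).trans le_sup_left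
  have hVdim : finrank F V ≤ a * ((d - b) * β₁ + (r - a) * β₂) := by
    rw [← ha]
    refine finrank_sum_le_aux I _ _ fun i hi => ?_
    have h1 : finrank F (P i) ≤ (H i \ J).card * β₁ :=
      finrank_sum_le_aux _ _ _ fun j hj => hSdim i (hI hi) j (Finset.mem_sdiff.1 hj).1
    have h2 : finrank F (Q i) ≤ (R \ I).card * β₂ :=
      finrank_sum_le_aux _ _ _ fun j hj => hTdim i (hI hi) j (Finset.mem_sdiff.1 hj).1
        (fun h => (Finset.mem_sdiff.1 hj).2 (h ▸ hi))
    rw [Finset.card_sdiff_of_subset (hJ i hi), hHcard i (hI hi), hb] at h1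
    rw [Finset.card_sdiff_of_subset hI, hRcard] at h2
    exact (Submodule.finrank_add_le_finrank_add_finrank _ _).trans (Nat.add_le_add h1 h2)
  have e1 := Submodule.finrank_sup_add_finrank_inf_eq (∑ i ∈ I, W i) K
  have e2 := Submodule.finrank_mono (sup_le hWV (le_sup_right : K ≤ V ⊔ K))
  have e3 := Submodule.finrank_add_le_finrank_add_finrank V K
  omega
end

section
/- Under the exact cooperative repair setup, for any subset I ⊆ R and any subset J ⊆ ⋂_{i∈I} H_i, one has the containment of subspaces Σ_{i∈I} W_i ⊆ Σ_{j∈J} W_j + Σ_{i∈I} ( Σ_{j ∈ H_i \ J} S_{j,i} + Σ_{i′ ∈ R \ I} T_{i′,i} ). -/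
open Module Submodule Finset

theorem aux_sum_le {ι F V : Type*} [Field F] [AddCommGroup V] [Module F V]
    (s : Finset ι) (f : ι → Submodule F V) (A : Submodule F V) (h : ∀ i ∈ s, f i ≤ A) :
    ∑ i ∈ s, f i ≤ A := by
  classical
  induction s using Finset.induction_on with
  | empty => simp
  | insert a s ha ih =>
    rw [Finset.sum_insert ha]
    exact sup_le (h a (Finset.mem_insert_self a s))
      (ih fun i hi => h i (Finset.mem_insert_of_mem hi))

theorem aux_le_sum {ι F V : Type*} [Field F] [AddCommGroup V] [Module F V]
    (s : Finset ι) (f : ι → Submodule F V) (i : ι) (hi : i ∈ s) :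
    f i ≤ ∑ i ∈ s, f i := by
  classical
  rw [← Finset.add_sum_erase s f hi]
  exact le_sup_left

/-- The key containment in the proof of Lemma 1: under the exact cooperative repair setup,
for `I ⊆ R` and `J ⊆ ⋂_{i ∈ I} H i`,
`Σ_{i∈I} W i ⊆ Σ_{j∈J} W j + Σ_{i∈I} (Σ_{j ∈ H i \ J} S j i + Σ_{i' ∈ R \ I} T i' i)`. -/
theorem mbcr_repair_containment {B : ℕ} {F : Type*} [Field F] [Fintype F]
    (n d r β₁ β₂ : ℕ) (hn : 0 < n) (hd : 0 < d) (hr : 0 < r) (hβ₁ : 0 < β₁) (hβ₂ : 0 < β₂)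
    (W : Fin n → Submodule F (Fin B → F))
    (R : Finset (Fin n)) (hRcard : R.card = r)
    (H : Fin n → Finset (Fin n))
    (hHcard : ∀ i ∈ R, (H i).card = d)
    (hHdisj : ∀ i ∈ R, ∀ j ∈ H i, j ∉ R)
    (S : Fin n → Fin n → Submodule F (Fin B → F))
    (T : Fin n → Fin n → Submodule F (Fin B → F))
    (hSdim : ∀ i ∈ R, ∀ j ∈ H i, finrank F (S j i) ≤ β₁)
    (hSsub : ∀ i ∈ R, ∀ j ∈ H i, S j i ≤ W j)
    (hTdim : ∀ i ∈ R, ∀ i' ∈ R, i' ≠ i → finrank F (T i' i) ≤ β₂)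
    (hTsub : ∀ i ∈ R, ∀ i' ∈ R, i' ≠ i → T i' i ≤ ∑ j ∈ H i', S j i')
    (hrepair : ∀ i ∈ R, W i ≤ (∑ j ∈ H i, S j i) + ∑ i' ∈ R.erase i, T i' i)
    (I : Finset (Fin n)) (hI : I ⊆ R)
    (J : Finset (Fin n)) (hJ : ∀ i ∈ I, J ⊆ H i) :
    (∑ i ∈ I, W i) ≤
      (∑ j ∈ J, W j) +
        ∑ i ∈ I, ((∑ j ∈ (H i) \ J, S j i) + ∑ i' ∈ R \ I, T i' i) := by
  have hS : ∀ i ∈ I, ∑ j ∈ H i, S j i ≤ (∑ j ∈ J, W j) +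
        ∑ i ∈ I, ((∑ j ∈ (H i) \ J, S j i) + ∑ i' ∈ R \ I, T i' i) := by
    intro i hi
    refine aux_sum_le _ _ _ fun j hj => ?_
    by_cases hjJ : j ∈ J
    · exact (hSsub i (hI hi) j hj).trans ((aux_le_sum J W j hjJ).trans le_sup_left)
    · refine le_trans ?_ le_sup_right
      refine le_trans ?_ (aux_le_sum I
        (fun i => (∑ j ∈ (H i) \ J, S j i) + ∑ i' ∈ R \ I, T i' i) i hi)
      refine le_trans ?_ le_sup_left
      exact aux_le_sum (H i \ J) (fun j => S j i) j (Finset.mem_sdiff.2 ⟨hj, hjJ⟩)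
  refine aux_sum_le _ _ _ fun i hi => (hrepair i (hI hi)).trans (sup_le (hS i hi) ?_)
  refine aux_sum_le _ _ _ fun k hk => ?_
  obtain ⟨hki, hkR⟩ := Finset.mem_erase.1 hk
  by_cases hkI : k ∈ I
  · exact (hTsub i (hI hi) k hkR hki).trans (hS k hkI)
  · refine le_trans ?_ le_sup_right
    refine le_trans ?_ (aux_le_sum I
      (fun i => (∑ j ∈ (H i) \ J, S j i) + ∑ i' ∈ R \ I, T i' i) i hi)
    refine le_trans ?_ le_sup_right
    exact aux_le_sum (R \ I) (fun k => T k i) k (Finset.mem_sdiff.2 ⟨hkR, hkI⟩)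
end

section
/- Suppose W_1, …, W_k are subspaces of 𝔽_q^B such that dim W_i ≤ α for every i, W_1 + ⋯ + W_k = 𝔽_q^B, and for each 2 ≤ i ≤ k one has dim W_i − dim( W_i ∩ (W_1 + ⋯ + W_{i−1}) ) ≤ (d−i+1)·β₁ + (r−1)·β₂. If in addition dim W_2 = α, then dim( W_1 ∩ W_2 ) = β₁. -/
open Module Submodule Finset

/-- From the proof of Property 1: with MBCR parameters (`k ≥ 2`), if `dim W i ≤ α` for all `i`,
`W 1 + ⋯ + W k = 𝔽_q^B`, the Lemma-1 dimension bounds hold, and `dim W 2 = α`,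
then `dim (W 1 ⊓ W 2) = β₁`. -/
theorem mbcr_pairwise_intersection {B : ℕ} {F : Type*} [Field F] [Fintype F]
    (k d r β₁ β₂ α : ℕ) (hk : 0 < k) (hd : 0 < d) (hr : 0 < r) (hβ₂ : 0 < β₂)
    (hkd : k ≤ d) (hk2 : 2 ≤ k) (hβ₁ : β₁ = 2 * β₂) (hα : α = d * β₁ + (r - 1) * β₂)
    (hB : B = k * (2 * d + r - k) * β₂)
    (W : ℕ → Submodule F (Fin B → F))
    (hdim : ∀ i ∈ Finset.Icc 1 k, finrank F (W i) ≤ α)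
    (hspan : (∑ i ∈ Finset.Icc 1 k, W i) = (⊤ : Submodule F (Fin B → F)))
    (hstep : ∀ i, 2 ≤ i → i ≤ k →
      finrank F (W i) -
        finrank F (W i ⊓ ∑ j ∈ Finset.Icc 1 (i - 1), W j : Submodule F (Fin B → F)) ≤
        (d - i + 1) * β₁ + (r - 1) * β₂)
    (hW2 : finrank F (W 2) = α) :
    finrank F (W 1 ⊓ W 2 : Submodule F (Fin B → F)) = β₁ := by
  have hF : ∀ n, 2 ≤ n → n ≤ k →
      (finrank F (∑ j ∈ Finset.Icc 1 n, W j : Submodule F (Fin B → F)) : ℤ)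
        + 2 * (2 * d + r - 2) * β₂
      ≤ finrank F (∑ j ∈ Finset.Icc 1 2, W j : Submodule F (Fin B → F))
        + n * (2 * d + r - n) * β₂ := by
    intro n hn
    induction n, hn using Nat.le_induction with
    | base => intro _; push_cast; exact le_refl _
    | succ n hn ih =>
      intro hnk
      have h1 := ih (by omega)
      have h2 := hstep (n + 1) (by omega) hnk
      rw [Nat.add_sub_cancel, tsub_le_iff_left] at h2
      have h3 := Submodule.finrank_sup_add_finrank_inf_eq (W (n + 1))
        (∑ j ∈ Finset.Icc 1 n, W j : Submodule F (Fin B → F))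
      rw [Finset.sum_Icc_succ_top (by omega : 1 ≤ n + 1), Submodule.add_eq_sup, sup_comm]
      generalize finrank F (∑ j ∈ Finset.Icc 1 2, W j : Submodule F (Fin B → F)) = s2 at *
      obtain ⟨e, rfl⟩ : ∃ e, d = n + 1 + e := ⟨d - (n + 1), by omega⟩
      obtain ⟨s, rfl⟩ : ∃ s, r = s + 1 := ⟨r - 1, by omega⟩
      rw [Nat.add_sub_cancel_left, Nat.add_sub_cancel, hβ₁] at h2
      zify at h2 h3
      push_cast at h1 ⊢
      nlinarith [h1, h2, h3]
  have hk' := hF k hk2 le_rfl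
  rw [hspan, finrank_top, finrank_fin_fun] at hk'
  have hS : (∑ j ∈ Finset.Icc 1 2, W j) = W 1 ⊔ W 2 := by
    rw [Finset.sum_Icc_succ_top (by omega)]; simp
  rw [hS] at hk'
  have h3 := Submodule.finrank_sup_add_finrank_inf_eq (W 1) (W 2)
  have h1 := hdim 1 (by simp; omega)
  have h2 := hstep 2 le_rfl hk2
  rw [show 2 - 1 = 1 from rfl, Finset.Icc_self, Finset.sum_singleton, inf_comm,
    tsub_le_iff_left, hW2] at h2
  have hBz : (B : ℤ) = k * (2 * d + r - k) * β₂ := by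
    obtain ⟨e, rfl⟩ : ∃ e, d = k + e := ⟨d - k, by omega⟩
    rw [hB, show 2 * (k + e) + r - k = k + 2 * e + r by omega]
    push_cast; ring
  rw [hW2] at h3
  generalize finrank F (W 1 ⊓ W 2 : Submodule F (Fin B → F)) = x at *
  obtain ⟨e, rfl⟩ : ∃ e, d = e + 2 := ⟨d - 2, by omega⟩
  obtain ⟨s, rfl⟩ : ∃ s, r = s + 1 := ⟨r - 1, by omega⟩
  rw [Nat.add_sub_cancel] at h2 hα
  rw [Nat.add_sub_cancel] at h2
  rw [hβ₁] at h2 hα ⊢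
  rw [hBz] at hk'
  clear hF hstep hdim hB hBz
  zify at h1 h2 h3 hα ⊢
  push_cast at hk'
  apply le_antisymm <;> nlinarith
end

section
/- Let W and W′ be subspaces of 𝔽_q^B with dim( W ∩ W′ ) = β₁. Suppose W decomposes as a direct sum W = U ⊕ T′, where T′ ⊆ W′ and dim T′ = β₂, and suppose T is a subspace with T ⊆ U, T ⊆ W′, and dim T = β₂. Then T ∩ T′ = {0} and T ⊕ T′ = W ∩ W′. -/
open Module Submodule

/-- Property 3 of the paper (second part): with `β₁ = 2 β₂` and `dim (W ⊓ W') = β₁`,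
if `W = U ⊕ T'` with `T' ⊆ W'`, `dim T' = β₂`, and `T ⊆ U`, `T ⊆ W'`, `dim T = β₂`,
then `T ∩ T' = {0}` and `T ⊕ T' = W ∩ W'`. -/
theorem mbcr_exchange_direct_sum {B : ℕ} {F : Type*} [Field F] [Fintype F]
    (β₁ β₂ : ℕ) (hβ₂ : 0 < β₂) (hβ₁ : β₁ = 2 * β₂)
    (W W' U T T' : Submodule F (Fin B → F))
    (hWW' : finrank F (W ⊓ W' : Submodule F (Fin B → F)) = β₁)
    (hdecomp : W = U ⊔ T') (hdisj : U ⊓ T' = ⊥)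
    (hT'W' : T' ≤ W') (hT'dim : finrank F T' = β₂)
    (hTU : T ≤ U) (hTW' : T ≤ W') (hTdim : finrank F T = β₂) :
    T ⊓ T' = ⊥ ∧ T ⊔ T' = W ⊓ W' := by
  have h0 : T ⊓ T' = ⊥ := by
    rw [eq_bot_iff, ← hdisj]
    exact inf_le_inf_right T' hTU
  refine ⟨h0, ?_⟩
  have hle : T ⊔ T' ≤ W ⊓ W' := by
    rw [hdecomp]
    exact le_inf (sup_le_sup_right hTU T') (sup_le hTW' hT'W')
  apply Submodule.eq_of_le_of_finrank_eq hle
  have h := Submodule.finrank_sup_add_finrank_inf_eq T T'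
  rw [h0, finrank_bot] at h
  omega
end

section
/- Let n, d, r, β₂ be positive integers with r ≥ 2, d ≥ 2, and n ≥ d + r, and set β₁ = 2·β₂ and α = d·β₁ + (r−1)·β₂. Then there do NOT exist: subspaces W_1, …, W_n of 𝔽_q^B, a linearly independent family g_1, …, g_α of vectors spanning W_1, and subsets G_i ⊆ {g_1, …, g_α} for 2 ≤ i ≤ n, such that for every 2 ≤ i ≤ n the span of G_i equals W_1 ∩ W_i with dim( W_1 ∩ W_i ) = β₁, and for all distinct 2 ≤ i, j ≤ n one has ( W_1 ∩ W_i ) ∩ ( W_1 ∩ W_j ) = {0}. (This is the combinatorial core of the theorem that no nontrivial linear exact MBCR code achieves repair-by-transfer: repair-by-transfer forces each transferred subspace W_1 ∩ W_i to be spanned by a subset G_i of the fixed stored basis of W_1, while the derived subspace properties force the intersections and disjointness above.) -/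
open Module Submodule

/-- Combinatorial core of the impossibility of repair-by-transfer for linear exact MBCR
codes (`r ≥ 2`, `d ≥ 2`): there is no node `i₀` (playing the role of node 1), no subspaces
`W i` of `𝔽_q^B`, no linearly independent family `g` of `α` vectors spanning `W i₀`, and no
subsets `G i` of those basis vectors such that for every `i ≠ i₀` the span of `G i` equals
`W i₀ ⊓ W i` with `dim (W i₀ ⊓ W i) = β₁`, while the subspaces `W i₀ ⊓ W i` (for distinct
`i, j ≠ i₀`) pairwise intersect trivially. -/
theorem mbcr_no_repair_by_transfer {B : ℕ} (hB : 0 < B) {F : Type*} [Field F] [Fintype F]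
    (n d r β₁ β₂ α : ℕ) (hr : 2 ≤ r) (hd : 2 ≤ d) (hβ₂ : 0 < β₂)
    (hn : d + r ≤ n) (hβ₁ : β₁ = 2 * β₂) (hα : α = d * β₁ + (r - 1) * β₂) :
    ¬ ∃ (i₀ : Fin n) (W : Fin n → Submodule F (Fin B → F)) (g : Fin α → (Fin B → F))
        (G : Fin n → Finset (Fin α)),
        LinearIndependent F g ∧
        Submodule.span F (Set.range g) = W i₀ ∧
        (∀ i : Fin n, i ≠ i₀ →
          Submodule.span F (g '' ↑(G i)) = W i₀ ⊓ W i ∧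
          finrank F (W i₀ ⊓ W i : Submodule F (Fin B → F)) = β₁) ∧
        (∀ i j : Fin n, i ≠ i₀ → j ≠ i₀ → i ≠ j →
          (W i₀ ⊓ W i) ⊓ (W i₀ ⊓ W j) = (⊥ : Submodule F (Fin B → F))) := by
  rintro ⟨i₀, W, g, G, hg, -, hG, hdisj⟩
  have hcard : ∀ i ∈ Finset.univ.erase i₀, (G i).card = β₁ := by
    intro i hi
    obtain ⟨h1, h2⟩ := hG i (Finset.ne_of_mem_erase hi)
    have hli : LinearIndependent F (fun x : (G i) => g x) :=
      hg.comp _ Subtype.val_injective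
    have h3 := finrank_span_eq_card hli
    have h4 : Set.range (fun x : (G i) => g x) = g '' ↑(G i) := by
      ext v; simp
    rw [h4, h1, h2] at h3
    simpa using h3.symm
  have hpd : (↑(Finset.univ.erase i₀) : Set (Fin n)).PairwiseDisjoint G := by
    intro i hi j hj hij
    have hi' : i ≠ i₀ := by simpa using hi
    have hj' : j ≠ i₀ := by simpa using hj
    refine Finset.disjoint_left.mpr fun x hxi hxj => hg.ne_zero x ?_
    have h := hdisj i j hi' hj' hij
    rw [← (hG i hi').1, ← (hG j hj').1] at h
    rw [← Submodule.mem_bot F, ← h]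
    exact ⟨Submodule.subset_span ⟨x, hxi, rfl⟩, Submodule.subset_span ⟨x, hxj, rfl⟩⟩
  have hle : ((Finset.univ.erase i₀).biUnion G).card ≤ α := by
    simpa using Finset.card_le_univ ((Finset.univ.erase i₀).biUnion G)
  rw [Finset.card_biUnion hpd, Finset.sum_congr rfl hcard] at hle
  simp only [Finset.sum_const, smul_eq_mul, Finset.card_erase_of_mem (Finset.mem_univ i₀),
    Finset.card_univ, Fintype.card_fin] at hle
  obtain ⟨s, rfl⟩ : ∃ s, r = s + 2 := ⟨r - 2, by omega⟩
  obtain ⟨m, rfl⟩ : ∃ m, n = d + s + 2 + m := ⟨n - (d + s + 2), by omega⟩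
  have e1 : d + s + 2 + m - 1 = d + s + 1 + m := by omega
  have e2 : s + 2 - 1 = s + 1 := by omega
  rw [e1, hα, e2, hβ₁] at hle
  have := Nat.zero_le (m * β₂)
  have := Nat.zero_le (s * β₂)
  nlinarith
end

section
/- Let P be a bivariate polynomial over F that is D-supported. Let x_1, …, x_k be k distinct elements of F and y_1, …, y_k be k distinct elements of F. If for every 1 ≤ l ≤ k the univariate polynomial P(x_l, Y) ∈ F[Y] is zero and the univariate polynomial P(X, y_l) ∈ F[X] is zero, then P = 0. (Consequently, any data-collector contacting k nodes of the constructed MBCR code — each node i storing the univariate polynomials F(x_i, Y) and F(X, y_i) — can reconstruct the encoded bivariate polynomial, since the code map is injective on these observations.) -/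
open Polynomial

/-- A bivariate polynomial `P ∈ F[X][Y]` (inner variable `X`, outer variable `Y`) is
`D`-supported if every monomial `X^i Y^j` occurring in `P` satisfies
`(i < k ∧ j < d + r) ∨ (i < d ∧ j < k)`. -/
def DSupported {F : Type*} [Field F] (k d r : ℕ) (P : Polynomial (Polynomial F)) : Prop :=
  ∀ i j : ℕ, (P.coeff j).coeff i ≠ 0 → (i < k ∧ j < d + r) ∨ (i < d ∧ j < k)

/-- Data reconstruction for the MBCR code: a `D`-supported bivariate polynomial that
vanishes identically (as a univariate polynomial) on `k` lines `X = x l` and on `k` lines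
`Y = y l`, for distinct `x l`'s and distinct `y l`'s, must be zero. -/
theorem mbcr_data_reconstruction {F : Type*} [Field F]
    (k d r : ℕ) (hk : 0 < k) (hd : 0 < d) (hr : 0 < r) (hkd : k ≤ d)
    (P : Polynomial (Polynomial F)) (hP : DSupported k d r P)
    (x y : Fin k → F) (hx : Function.Injective x) (hy : Function.Injective y)
    (hXlines : ∀ l : Fin k, P.map (Polynomial.evalRingHom (x l)) = 0)
    (hYlines : ∀ l : Fin k, P.eval (Polynomial.C (y l)) = 0) :
    P = 0 := by
  classical
  -- the coefficients of `Y^j` with `j ≥ k` have degree `< k` in `X` and `k` roots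
  have hcoeff : ∀ j, k ≤ j → P.coeff j = 0 := by
    intro j hj
    refine Polynomial.eq_zero_of_degree_lt_of_eval_finset_eq_zero
      (Finset.univ.image x) ?_ ?_
    · rw [Finset.card_image_of_injective _ hx, Finset.card_univ, Fintype.card_fin,
        Polynomial.degree_lt_iff_coeff_zero]
      intro i hi
      by_contra hne
      rcases hP i j hne with h | h <;> omega
    · intro a ha
      obtain ⟨l, -, rfl⟩ := Finset.mem_image.mp ha
      have h := congrArg (fun Q => Polynomial.coeff Q j) (hXlines l)
      simpa [Polynomial.coeff_map] using h
  -- hence `P` has degree `< k` in `Y` and `k` roots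
  have hinj : Function.Injective (fun l => (Polynomial.C (y l) : Polynomial F)) :=
    fun a b h => hy (Polynomial.C_injective h)
  refine Polynomial.eq_zero_of_degree_lt_of_eval_finset_eq_zero
    (Finset.univ.image (fun l => (Polynomial.C (y l) : Polynomial F))) ?_ ?_
  · rw [Finset.card_image_of_injective _ hinj, Finset.card_univ, Fintype.card_fin,
      Polynomial.degree_lt_iff_coeff_zero]
    exact fun j hj => hcoeff j hj
  · intro a ha
    obtain ⟨l, -, rfl⟩ := Finset.mem_image.mp ha
    exact hYlines l
end

section
/- Let x_1, …, x_n be n distinct elements of F and y_1, …, y_n be n distinct elements of F, where n ≥ d + r. Let P and Q be D-supported bivariate polynomials over F. Let R ⊆ {1,…,n} with |R| = r, and for each i ∈ R let H_i ⊆ {1,…,n} \ R with |H_i| = d. If P(x_h, y_i) = Q(x_h, y_i) and P(x_i, y_h) = Q(x_i, y_h) for every i ∈ R and every h ∈ H_i, then for every i ∈ R the univariate polynomials agree: P(x_i, Y) = Q(x_i, Y) in F[Y] and P(X, y_i) = Q(X, y_i) in F[X]. (This is the exact cooperative regeneration property: each newcomer i ∈ R recovers its full stored content from β₁ = 2 field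 elements downloaded from each of its d helpers together with β₂ = 1 field element exchanged with each of the other r−1 newcomers.) -/
open Polynomial

theorem DSupported.degree_eval {F : Type*} [Field F] {k d r : ℕ} (hkd : k ≤ d)
    {P : Polynomial (Polynomial F)} (hP : DSupported k d r P) (b : F) :
    (P.eval (Polynomial.C b)).degree < (d : WithBot ℕ) := by
  rw [Polynomial.degree_lt_iff_coeff_zero]
  intro m hm
  rw [Polynomial.eval_eq_sum, Polynomial.sum, Polynomial.finset_sum_coeff]
  apply Finset.sum_eq_zero
  intro j _
  rw [← Polynomial.C_pow, Polynomial.coeff_mul_C]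
  have h0 : (P.coeff j).coeff m = 0 := by
    by_contra h
    have := hP m j h
    omega
  rw [h0, zero_mul]

theorem DSupported.degree_map {F : Type*} [Field F] {k d r : ℕ} (hkd : k ≤ d)
    {P : Polynomial (Polynomial F)} (hP : DSupported k d r P) (a : F) :
    (P.map (Polynomial.evalRingHom a)).degree < ((d + r : ℕ) : WithBot ℕ) := by
  rw [Polynomial.degree_lt_iff_coeff_zero]
  intro m hm
  have h0 : P.coeff m = 0 := by
    ext i
    by_contra h
    have := hP i m h
    omega
  rw [Polynomial.coeff_map, h0, map_zero]

/-- Exact cooperative regeneration for the MBCR code: if two `D`-supported bivariate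
polynomials `P, Q` agree at the points `(x h, y i)` and `(x i, y h)` for every failed node
`i ∈ R` and every helper `h ∈ H i`, then for each `i ∈ R` the stored univariate
polynomials agree: `P(x i, Y) = Q(x i, Y)` and `P(X, y i) = Q(X, y i)`. -/
theorem mbcr_exact_regeneration {F : Type*} [Field F]
    (k d r n : ℕ) (hk : 0 < k) (hd : 0 < d) (hr : 0 < r) (hkd : k ≤ d) (hn : d + r ≤ n)
    (x y : Fin n → F) (hx : Function.Injective x) (hy : Function.Injective y)
    (P Q : Polynomial (Polynomial F)) (hP : DSupported k d r P) (hQ : DSupported k d r Q)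
    (R : Finset (Fin n)) (hRcard : R.card = r)
    (H : Fin n → Finset (Fin n))
    (hHcard : ∀ i ∈ R, (H i).card = d)
    (hHdisj : ∀ i ∈ R, ∀ h ∈ H i, h ∉ R)
    (heval₁ : ∀ i ∈ R, ∀ h ∈ H i,
      (P.eval (Polynomial.C (y i))).eval (x h) = (Q.eval (Polynomial.C (y i))).eval (x h))
    (heval₂ : ∀ i ∈ R, ∀ h ∈ H i,
      (P.eval (Polynomial.C (y h))).eval (x i) = (Q.eval (Polynomial.C (y h))).eval (x i)) :
    ∀ i ∈ R,
      P.map (Polynomial.evalRingHom (x i)) = Q.map (Polynomial.evalRingHom (x i)) ∧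
      P.eval (Polynomial.C (y i)) = Q.eval (Polynomial.C (y i)) := by
  have key : ∀ i ∈ R, P.eval (Polynomial.C (y i)) = Q.eval (Polynomial.C (y i)) := by
    intro i hi
    refine Polynomial.eq_of_degrees_lt_of_eval_index_eq (v := x) (H i) hx.injOn ?_ ?_
      (heval₁ i hi)
    · rw [hHcard i hi]; exact hP.degree_eval hkd _
    · rw [hHcard i hi]; exact hQ.degree_eval hkd _
  intro i hi
  refine ⟨?_, key i hi⟩
  have hdisj : Disjoint (H i) R := Finset.disjoint_left.mpr (hHdisj i hi)
  have hcard : (H i ∪ R).card = d + r := by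
    rw [Finset.card_union_of_disjoint hdisj, hHcard i hi, hRcard]
  refine Polynomial.eq_of_degrees_lt_of_eval_index_eq (v := y) (H i ∪ R) hy.injOn ?_ ?_ ?_
  · rw [hcard]; exact hP.degree_map hkd _
  · rw [hcard]; exact hQ.degree_map hkd _
  · intro j hj
    rw [Polynomial.map_evalRingHom_eval, Polynomial.map_evalRingHom_eval]
    unfold Polynomial.evalEval
    rcases Finset.mem_union.mp hj with h | h
    · exact heval₂ i hi j h
    · rw [key j h]
end

section
/- Let x₀ and y₀ be elements of F, let f ∈ F[Y] be a univariate polynomial of degree < d + r and g ∈ F[X] a univariate polynomial of degree < d such that f(y₀) = g(x₀). Then there exists a D-supported bivariate polynomial P ∈ F[X,Y] with P(x₀, Y) = f(Y) and P(X, y₀) = g(X). (Consequently, in the constructed MBCR code the subspace stored by each node has dimension exactly α = 2d + r − 1, since a node's content is precisely such a pair (f, g) subject only to the consistency condition f(y₀) = g(x₀).) -/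
open Polynomial

/-- Node contents are exactly the consistent pairs of univariate polynomials: for any
`x₀, y₀ ∈ F`, any `f ∈ F[Y]` of degree `< d + r` and any `g ∈ F[X]` of degree `< d` with
`f(y₀) = g(x₀)`, there is a `D`-supported bivariate polynomial `P` with `P(x₀, Y) = f`
and `P(X, y₀) = g`. -/
theorem mbcr_node_content_realizable {F : Type*} [Field F]
    (k d r : ℕ) (hk : 0 < k) (hd : 0 < d) (hr : 0 < r) (hkd : k ≤ d)
    (x₀ y₀ : F) (f g : Polynomial F)
    (hf : f.degree < ((d + r : ℕ) : WithBot ℕ))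
    (hg : g.degree < ((d : ℕ) : WithBot ℕ))
    (hfg : f.eval y₀ = g.eval x₀) :
    ∃ P : Polynomial (Polynomial F), DSupported k d r P ∧
      P.map (Polynomial.evalRingHom x₀) = f ∧
      P.eval (Polynomial.C y₀) = g := by
  refine ⟨f.map C + C (g - C (f.eval y₀)), ?_, ?_, ?_⟩
  · intro i j h
    rw [coeff_add, coeff_map, coeff_C, coeff_add, coeff_C] at h
    by_cases hj : j = 0
    · subst hj
      by_cases hi : i = 0
      · left; omega
      · right
        refine ⟨?_, hk⟩
        by_contra hid
        apply h
        have : g.coeff i = 0 := coeff_eq_zero_of_degree_lt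
          (lt_of_lt_of_le hg (by exact_mod_cast not_lt.mp hid))
        simp [hi, this, coeff_C]
    · left
      by_cases hi : i = 0
      · refine ⟨by omega, ?_⟩
        by_contra hid
        apply h
        have : f.coeff j = 0 := coeff_eq_zero_of_degree_lt
          (lt_of_lt_of_le hf (by exact_mod_cast not_lt.mp hid))
        simp [hj, this]
      · exact absurd (by simp [hi, hj]) h
  · have h1 : (evalRingHom x₀).comp (C : F →+* F[X]) = RingHom.id F := by
      ext a; simp
    rw [Polynomial.map_add, Polynomial.map_map, h1, Polynomial.map_id, Polynomial.map_C]
    simp [hfg]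
  · rw [eval_add, eval_C, eval_map, eval₂_at_apply]
    ring
end
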